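/- Let T̄(x) = x^{n−1}·T(x) = ∑_{i=0}^{2n−2} t_{i−n+1} x^i ∈ k[x]. For vectors u, g ∈ k^n, the Toeplitz system T·u = g holds if and only if there exist polynomials a(x) of degree ≤ n−2 and b(x) of degree ≤ n−1 such that T̄(x)·u(x) + x^{2n−1}·b(x) = x^{n−1}·g(x) + a(x). -/

import Mathlib

open Polynomial

/-!
For `0 ≤ i < n` the coefficient of `x^{n-1+i}` in `T̄(x) u(x)` is `∑ j, t_{i-j} u_j = (T u)_i`
(`coeff_toeplitz_mul`), so `T u = g` says exactly that `T̄ u` and `x^{n-1} g` agree in the degrees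
`n-1, …, 2n-2`. Since `deg (T̄ u) ≤ 3n-3`, the remaining part of the difference `T̄ u - x^{n-1} g`
consists of its terms of degree `< n-1`, collected in `a`, and those of degree in `[2n-1, 3n-1)`,
collected in `-x^{2n-1} b`.
-/

lemma coeff_sum_range_C_mul_X_pow {k : Type*} [Field k] (N : ℕ) (f : ℕ → k) (m : ℕ) :
    (∑ i ∈ Finset.range N, C (f i) * X ^ i).coeff m = if m < N then f m else 0 := by
  simp [coeff_C_mul, coeff_X_pow]

lemma coeff_sum_fin_C_mul_X_pow {k : Type*} [Field k] (n : ℕ) (g : Fin n → k) (m : ℕ) :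
    (∑ i : Fin n, C (g i) * X ^ (i : ℕ)).coeff m = if h : m < n then g ⟨m, h⟩ else 0 := by
  simp only [finsetSum_coeff, coeff_C_mul, coeff_X_pow, mul_ite, mul_one, mul_zero]
  split_ifs with h
  · rw [Finset.sum_eq_single ⟨m, h⟩]
    · simp
    · intro j _ hj
      rw [if_neg]
      rintro rfl
      exact hj rfl
    · simp
  · refine Finset.sum_eq_zero fun j _ => if_neg ?_
    have := j.2
    omega

lemma degree_sum_range_C_mul_X_pow_lt {k : Type*} [Field k] (N : ℕ) (f : ℕ → k) :
    (∑ i ∈ Finset.range N, C (f i) * X ^ i).degree < (N : WithBot ℕ) := by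
  rw [degree_lt_iff_coeff_zero]
  intro m hm
  rw [coeff_sum_range_C_mul_X_pow, if_neg (by omega)]

lemma coeff_mul_sum_fin {k : Type*} [Field k] (n : ℕ) (P : k[X]) (u : Fin n → k) (m : ℕ) :
    (P * ∑ j : Fin n, C (u j) * X ^ (j : ℕ)).coeff m =
      ∑ j : Fin n, if (j : ℕ) ≤ m then P.coeff (m - j) * u j else 0 := by
  rw [Finset.mul_sum, finsetSum_coeff]
  refine Finset.sum_congr rfl fun j _ => ?_
  rw [← mul_assoc, coeff_mul_X_pow', coeff_mul_C]

/-- The middle coefficients of `T̄(x) u(x)` are the entries of the Toeplitz product `T u`. -/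
lemma coeff_toeplitz_mul {k : Type*} [Field k] (n : ℕ) (t : ℤ → k) (u : Fin n → k) (i : Fin n) :
    ((∑ i ∈ Finset.range (2 * n - 1), C (t ((i : ℤ) - n + 1)) * X ^ i) *
      ∑ j : Fin n, C (u j) * X ^ (j : ℕ)).coeff (n - 1 + i) =
      ∑ j : Fin n, t ((i : ℤ) - (j : ℤ)) * u j := by
  rw [coeff_mul_sum_fin]
  refine Finset.sum_congr rfl fun j _ => ?_
  have hi := i.2
  have hj := j.2
  rw [if_pos (by omega), coeff_sum_range_C_mul_X_pow _ (fun i : ℕ => t ((i : ℤ) - n + 1)),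
    if_pos (by omega)]
  congr 2
  omega

lemma coeff_toeplitz_mul_of_le {k : Type*} [Field k] (n : ℕ) (t : ℤ → k) (u : Fin n → k)
    (m : ℕ) (hm : 3 * n - 1 ≤ m) :
    ((∑ i ∈ Finset.range (2 * n - 1), C (t ((i : ℤ) - n + 1)) * X ^ i) *
      ∑ j : Fin n, C (u j) * X ^ (j : ℕ)).coeff m = 0 := by
  rw [coeff_mul_sum_fin]
  refine Finset.sum_eq_zero fun j _ => ?_
  have hj := j.2
  rw [if_pos (by omega), coeff_sum_range_C_mul_X_pow _ (fun i : ℕ => t ((i : ℤ) - n + 1)),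
    if_neg (by omega), zero_mul]

/-- with `T̄(x) = x^{n-1} T(x) = ∑_{i=0}^{2n-2} t_{i-n+1} x^i`, the system
`T·u = g` holds iff there exist `a` of degree ≤ n-2 and `b` of degree ≤ n-1 with
`T̄(x)u(x) + x^{2n-1} b(x) = x^{n-1} g(x) + a(x)`. -/
theorem stmt16 (k : Type*) [Field k] (n : ℕ) (hn : 1 ≤ n) (t : ℤ → k)
    (T : Matrix (Fin n) (Fin n) k) (hT : ∀ i j : Fin n, T i j = t ((i : ℤ) - (j : ℤ)))
    (Tbar : Polynomial k)
    (hTbar : Tbar = ∑ i ∈ Finset.range (2 * n - 1),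
      Polynomial.C (t ((i : ℤ) - n + 1)) * Polynomial.X ^ i)
    (u g : Fin n → k)
    (U G : Polynomial k)
    (hU : U = ∑ i : Fin n, Polynomial.C (u i) * Polynomial.X ^ (i : ℕ))
    (hG : G = ∑ i : Fin n, Polynomial.C (g i) * Polynomial.X ^ (i : ℕ)) :
    T.mulVec u = g ↔
      ∃ a b : Polynomial k,
        a.degree < ((n - 1 : ℕ) : WithBot ℕ) ∧ b.degree < (n : ℕ) ∧
        Tbar * U + X ^ (2 * n - 1) * b = X ^ (n - 1) * G + a := by
  have hmid : ∀ i : Fin n, (Tbar * U).coeff (n - 1 + i) = T.mulVec u i := by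
    intro i
    rw [hTbar, hU, coeff_toeplitz_mul]
    simp only [Matrix.mulVec, dotProduct, hT]
  have hhigh : ∀ m, 3 * n - 1 ≤ m → (Tbar * U).coeff m = 0 := by
    intro m hm
    rw [hTbar, hU, coeff_toeplitz_mul_of_le n t u m hm]
  have hGc : ∀ m, G.coeff m = if h : m < n then g ⟨m, h⟩ else 0 := by
    intro m
    rw [hG, coeff_sum_fin_C_mul_X_pow]
  constructor
  · intro h
    refine ⟨∑ i ∈ Finset.range (n - 1), C ((Tbar * U).coeff i) * X ^ i,
      ∑ i ∈ Finset.range n, C (-(Tbar * U).coeff (2 * n - 1 + i)) * X ^ i,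
      degree_sum_range_C_mul_X_pow_lt _ _,
      degree_sum_range_C_mul_X_pow_lt n (fun i => -(Tbar * U).coeff (2 * n - 1 + i)), ?_⟩
    ext m
    rw [coeff_add, coeff_add, coeff_X_pow_mul', coeff_X_pow_mul', hGc,
      coeff_sum_range_C_mul_X_pow n (fun i => -(Tbar * U).coeff (2 * n - 1 + i)),
      coeff_sum_range_C_mul_X_pow]
    rcases lt_or_ge m (n - 1) with h1 | h1
    · rw [if_neg (by omega), if_neg (by omega), if_pos h1]
      ring
    rw [if_pos h1, if_neg (by omega : ¬ m < n - 1)]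
    rcases lt_or_ge m (2 * n - 1) with h2 | h2
    · rw [if_neg (by omega), dif_pos (by omega), ← h, ← hmid, add_zero, add_zero]
      congr 1
      simp only
      omega
    rw [if_pos h2, dif_neg (by omega)]
    rcases lt_or_ge m (3 * n - 1) with h3 | h3
    · rw [if_pos (by omega), Nat.add_sub_cancel' h2]
      ring
    · rw [if_neg (by omega), hhigh m h3]
  · rintro ⟨a, b, ha, -, h⟩
    funext i
    have hi := i.2
    have hc := congrArg (fun p => p.coeff (n - 1 + i)) h
    simp only [coeff_add, coeff_X_pow_mul'] at hc
    rw [hmid, if_neg (by omega), if_pos (by omega), Nat.add_sub_cancel_left, hGc, dif_pos hi,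
      (degree_lt_iff_coeff_zero a (n - 1)).1 ha _ (by omega)] at hc
    simpa using hc
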